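/- Let N ≥ 1, r > 0, 0 < d ≤ 2r, x₁ ∈ ℝ and y₁ ≤ y₂. For i = 1,…,N let Sᵢ = {x₁ + (i−1)·d} × [y₁, y₂] be the vertical segment traced by robot i. Then the rectangle A = [x₁ − r, x₁ + (N−1)·d + r] × [y₁, y₂] satisfies A ⊆ ⋃ᵢ {p ∈ ℝ² | infDist p Sᵢ ≤ r}; i.e., if the robots track the N parallel vertical lines with spacing d, the entire rectangle A is covered by their sensors of radius r. -/

import Mathlib

theorem sweep_aux (r d : ℝ) (hdr : d ≤ 2 * r) (x₁ x : ℝ) (hx : x₁ - r ≤ x)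
    (N : ℕ) (hN : 1 ≤ N) (h : x ≤ x₁ + (N - 1 : ℝ) * d + r) :
    ∃ i : ℕ, 1 ≤ i ∧ i ≤ N ∧ |x - (x₁ + ((i : ℝ) - 1) * d)| ≤ r := by
  induction N, hN using Nat.le_induction with
  | base =>
    refine ⟨1, le_rfl, le_rfl, ?_⟩
    rw [abs_le]
    push_cast at h ⊢
    constructor <;> linarith
  | succ n hn ih =>
    by_cases hc : x ≤ x₁ + (n - 1 : ℝ) * d + r
    · obtain ⟨i, h1, h2, h3⟩ := ih hc
      exact ⟨i, h1, by omega, h3⟩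
    · refine ⟨n + 1, by omega, le_rfl, ?_⟩
      rw [abs_le]
      push_cast at h ⊢
      constructor <;> linarith

/-- If `N` robots with certainty-sensing radius `r` track the parallel vertical
segments `Sᵢ = {x₁ + (i-1)d} × [y₁, y₂]` with spacing `0 < d ≤ 2r`, then the
whole rectangle `A = [x₁ - r, x₁ + (N-1)d + r] × [y₁, y₂]` is covered. -/
theorem sweep_covers_rectangle
    (N : ℕ) (hN : 1 ≤ N) (r d : ℝ) (hr : 0 < r) (hd : 0 < d) (hdr : d ≤ 2 * r)
    (x₁ y₁ y₂ : ℝ) (hy : y₁ ≤ y₂)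
    (S : ℕ → Set (EuclideanSpace ℝ (Fin 2)))
    (hS : ∀ i, S i = {p : EuclideanSpace ℝ (Fin 2) |
      p 0 = x₁ + ((i : ℝ) - 1) * d ∧ p 1 ∈ Set.Icc y₁ y₂}) :
    {p : EuclideanSpace ℝ (Fin 2) |
        p 0 ∈ Set.Icc (x₁ - r) (x₁ + (N - 1 : ℝ) * d + r) ∧ p 1 ∈ Set.Icc y₁ y₂} ⊆
      ⋃ i ∈ Finset.Icc 1 N, {p : EuclideanSpace ℝ (Fin 2) | Metric.infDist p (S i) ≤ r} := by
  rintro p ⟨⟨hx1, hx2⟩, hp⟩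
  obtain ⟨i, h1, h2, h3⟩ := sweep_aux r d hdr x₁ (p 0) hx1 N hN hx2
  simp only [Set.mem_iUnion, Finset.mem_Icc, Set.mem_setOf_eq]
  refine ⟨i, ⟨h1, h2⟩, ?_⟩
  have hq : (!₂[x₁ + ((i : ℝ) - 1) * d, p 1] : EuclideanSpace ℝ (Fin 2)) ∈ S i := by
    rw [hS]
    exact ⟨by simp, by simpa using hp⟩
  refine (Metric.infDist_le_dist_of_mem hq).trans ?_
  rw [EuclideanSpace.dist_eq]
  simpa [Fin.sum_univ_two, Real.dist_eq, Real.sqrt_sq_eq_abs] using h3
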